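/- Let n ≥ 2 and let E ⊂ ℝⁿ = ℝ^{n−1} × ℝ be an 𝓗ˢ-measurable set with 0 < 𝓗ˢ(E) < ∞, where s = dim_H E > 1. Then there exists a set X ⊂ ℝ^{n−1} with 𝓛^{n−1}(X) = 0 such that for every u ∈ ℝ^{n−1} \ X and every 𝓗ˢ-measurable set F ⊂ E with 𝓗ˢ(F) > 0, the set π_u(F) ⊂ ℝ has positive one-dimensional Lebesgue measure: 𝓛¹(π_u(F)) > 0. -/

import Mathlib

open MeasureTheory RealInnerProductSpace

/-- The dual projection `π_u : ℝⁿ = ℝ^{n−1} × ℝ → ℝ`, `π_u(a,b) = a·u + b`. -/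
noncomputable def dualProj {n : ℕ} (u : EuclideanSpace ℝ (Fin (n - 1)))
    (p : EuclideanSpace ℝ (Fin (n - 1)) × ℝ) : ℝ :=
  ⟪p.1, u⟫ + p.2

/-!
Let `μ` be `μH[s]` restricted to `E`. A Vitali covering argument gives `μ (B(x, r)) ≤ c(x) r ^ s`
for `μ`-almost every `x`, so, as `1 < s`, the Riesz potential `∫ |x - y|⁻¹ dμ(y)` is finite almost
everywhere. On the other hand the parameters `u` in a ball with `|π_u(x - y)| ≤ δ` have measure
`O(δ / |x - y|)`. Integrating over `y`, Tonelli and Fatou show that for almost every `u` the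
pushforward of `μ` under `π_u` has finite lower density with respect to Lebesgue measure at `π_u(x)`
for `μ`-almost every `x`. By differentiation of measures this pushforward is therefore absolutely
continuous, and a set `F ⊆ E` whose image under `π_u` is Lebesgue null satisfies `μH[s] F = 0`.
-/

open Filter Metric Set Topology
open scoped ENNReal NNReal

lemma ediam_closedBall_le_two_mul_ofReal {X : Type*} [PseudoMetricSpace X] (x : X) {r : ℝ}
    (hr : 0 ≤ r) : ediam (closedBall x r) ≤ 2 * ENNReal.ofReal r := by
  rw [← closedEBall_ofReal hr]
  exact ediam_closedEBall_le

section HausdorffDensity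

variable {X : Type*} [MetricSpace X] [MeasurableSpace X] [BorelSpace X] {s : ℝ}

lemma hausdorffMeasure_eq_zero_of_tendsto_tsum_ediam (hs : 0 < s) {A : Set X} {ι : ℕ → Type*}
    [∀ k, Countable (ι k)] (S : ∀ k, ι k → Set X) (hA : ∀ k, A ⊆ ⋃ i, S k i)
    (hS : Tendsto (fun k ↦ ∑' i, ediam (S k i) ^ s) atTop (𝓝 0)) : μH[s] A = 0 := by
  have hdiam (k : ℕ) (i : ι k) : ediam (S k i) ≤ (∑' i, ediam (S k i) ^ s) ^ s⁻¹ :=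
    (ENNReal.le_rpow_inv_iff hs).2 (ENNReal.le_tsum i)
  have hdiam_tendsto : Tendsto (fun k ↦ (∑' i, ediam (S k i) ^ s) ^ s⁻¹) atTop (𝓝 0) := by
    simpa only [ENNReal.zero_rpow_of_pos (inv_pos.2 hs)] using hS.ennrpow_const s⁻¹
  have hle := Measure.hausdorffMeasure_le_liminf_tsum s A _ hdiam_tendsto S
    (.of_forall hdiam) (.of_forall hA)
  exact nonpos_iff_eq_zero.1 (hle.trans_eq hS.liminf_eq)

lemma exists_countable_closedBall_cover_tsum_le [SecondCountableTopology X] {μ : Measure X}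
    [IsFiniteMeasure μ] (hs : 0 < s) {ε : ℝ≥0∞} (hε : ε ≠ ⊤) {A : Set X}
    (hA : ∀ x ∈ A, ∃ r > 0, ENNReal.ofReal r ^ s ≤ ε * μ (closedBall x r)) :
    ∃ (c : Set X) (r : X → ℝ), c.Countable ∧ A ⊆ ⋃ x : c, closedBall x.1 (r x) ∧
      ∑' x : c, ediam (closedBall x.1 (r x)) ^ s ≤ 10 ^ s * ε * μ univ := by
  choose! r hr_pos hr using hA
  have hr_le : ∀ x ∈ A, r x ≤ ((ε * μ univ) ^ s⁻¹).toReal := fun x hx ↦ by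
    rw [← ENNReal.ofReal_le_iff_le_toReal (by finiteness), ENNReal.le_rpow_inv_iff hs]
    exact (hr x hx).trans (by gcongr; exact subset_univ _)
  obtain ⟨c, hcA, hdisj, hcover⟩ := Vitali.exists_disjoint_subfamily_covering_enlargement_closedBall
    A id r _ hr_le 5 (by norm_num)
  refine ⟨c, fun x ↦ 5 * r x, ?_, fun x hx ↦ ?_, ?_⟩
  · exact hdisj.countable_of_nonempty_interior fun x hx ↦
      (nonempty_ball.2 (hr_pos x (hcA hx))).mono ball_subset_interior_closedBall
  · obtain ⟨y, hy, hxy⟩ := hcover x hx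
    exact mem_iUnion.2 ⟨⟨y, hy⟩, hxy (mem_closedBall_self (hr_pos x hx).le)⟩
  calc ∑' x : c, ediam (closedBall x.1 (5 * r x)) ^ s
      ≤ ∑' x : c, 10 ^ s * ε * μ (closedBall x.1 (r x)) := ENNReal.tsum_le_tsum fun x ↦ by
        have hdiam : ediam (closedBall x.1 (5 * r x)) ≤ 10 * ENNReal.ofReal (r x) := by
          have hrx := hr_pos x (hcA x.2)
          refine (ediam_closedBall_le_two_mul_ofReal _ (by positivity)).trans_eq ?_
          rw [ENNReal.ofReal_mul (by norm_num), ← mul_assoc]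
          norm_num
        rw [mul_assoc]
        refine (ENNReal.rpow_le_rpow hdiam hs.le).trans ?_
        rw [ENNReal.mul_rpow_of_nonneg _ _ hs.le]
        gcongr
        exact hr _ (hcA x.2)
    _ = 10 ^ s * ε * ∑' x : c, μ (closedBall x.1 (r x)) := ENNReal.tsum_mul_left
    _ ≤ 10 ^ s * ε * μ univ := by
        gcongr
        exact tsum_measure_le_measure_univ (fun _ ↦ measurableSet_closedBall.nullMeasurableSet)
          (hdisj.subtype _ _ |>.mono fun _ _ h ↦ h.aedisjoint)

lemma ae_hausdorffMeasure_exists_forall_measure_closedBall_le [SecondCountableTopology X]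
    (μ : Measure X) [IsFiniteMeasure μ] (hs : 0 < s) :
    ∀ᵐ x ∂(μH[s] : Measure X), ∃ c : ℝ≥0, ∀ r > 0,
      μ (closedBall x r) ≤ c * ENNReal.ofReal r ^ s := by
  rw [ae_iff]
  push Not
  set A := {x | ∀ c : ℝ≥0, ∃ r > 0, c * ENNReal.ofReal r ^ s < μ (closedBall x r)}
  have hA (k : ℕ) : ∀ x ∈ A, ∃ r > 0,
      ENNReal.ofReal r ^ s ≤ ((k + 1 : ℕ) : ℝ≥0∞)⁻¹ * μ (closedBall x r) := fun x hx ↦ by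
    obtain ⟨r, hr, hlt⟩ := hx (k + 1 : ℕ)
    refine ⟨r, hr, ?_⟩
    rw [mul_comm, ← div_eq_mul_inv, ENNReal.le_div_iff_mul_le (by simp) (by simp), mul_comm]
    exact_mod_cast hlt.le
  choose c r hc hcover hsum using fun k ↦
    exists_countable_closedBall_cover_tsum_le hs (by simp) (hA k)
  have (k : ℕ) : Countable (c k) := (hc k).to_subtype
  refine hausdorffMeasure_eq_zero_of_tendsto_tsum_ediam hs _ hcover
    (tendsto_of_tendsto_of_tendsto_of_le_of_le tendsto_const_nhds ?_ (fun _ ↦ zero_le) hsum)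
  have hinv : Tendsto (fun k : ℕ ↦ ((k + 1 : ℕ) : ℝ≥0∞)⁻¹) atTop (𝓝 0) :=
    ENNReal.tendsto_inv_nat_nhds_zero.comp (tendsto_add_atTop_nat 1)
  simpa using ENNReal.Tendsto.mul_const
    (ENNReal.Tendsto.const_mul (a := 10 ^ s) hinv (.inr (by finiteness)))
    (.inr (measure_ne_top μ univ))

end HausdorffDensity

lemma ofReal_half_pow (j : ℕ) : ENNReal.ofReal ((1 / 2) ^ j) = (2 ^ j)⁻¹ := by
  rw [ENNReal.ofReal_pow (by norm_num), one_div, ENNReal.ofReal_inv_of_pos (by norm_num),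
    ENNReal.ofReal_ofNat, ENNReal.inv_pow]

lemma inv_edist_rpow_le_one_add_tsum_indicator {X : Type*} [PseudoMetricSpace X]
    {t : ℝ} (ht : 0 ≤ t) (x y : X) :
    (edist x y ^ t)⁻¹ ≤ 1 + ∑' j : ℕ,
      (closedBall x ((1 / 2) ^ j)).indicator (fun _ ↦ ((2 : ℝ≥0∞) ^ (j + 1)) ^ t) y := by
  rcases (dist_nonneg (x := x) (y := y)).eq_or_lt' with hxy | hxy
  · have hdiv : ∑' _ : ℕ, (1 : ℝ≥0∞) = ⊤ := ENNReal.tsum_const_eq_top_of_ne_zero one_ne_zero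
    refine le_add_left (le_top.trans (hdiv.symm.trans_le (ENNReal.tsum_le_tsum fun j ↦ ?_)))
    rw [indicator_of_mem (mem_closedBall'.2 (hxy.trans_le (by positivity)))]
    simpa only [ENNReal.one_rpow] using
      ENNReal.rpow_le_rpow (one_le_pow₀ (one_le_two (α := ℝ≥0∞)) (n := j + 1)) ht
  rcases le_total 1 (dist x y) with hfar | hnear
  · have hedist : 1 ≤ edist x y := by rwa [edist_dist, ENNReal.one_le_ofReal]
    refine le_add_right (ENNReal.inv_le_one.2 ?_)
    simpa only [ENNReal.one_rpow] using ENNReal.rpow_le_rpow hedist ht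
  obtain ⟨j, hlt, hle⟩ := exists_nat_pow_near_of_lt_one hxy hnear
    (y := (1 / 2 : ℝ)) (by norm_num) (by norm_num)
  refine le_add_left (le_trans ?_ (ENNReal.le_tsum j))
  rw [indicator_of_mem (mem_closedBall'.2 hle), ← ENNReal.inv_rpow]
  gcongr
  rw [ENNReal.inv_le_iff_inv_le, ← ofReal_half_pow, edist_dist]
  exact ENNReal.ofReal_le_ofReal hlt.le

section RieszPotential

variable {X : Type*} [PseudoMetricSpace X] [MeasurableSpace X]

/-- The Riesz potential of order `t` of the measure `μ` at the point `x`. For `t > 0` the kernel is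
`⊤` on the diagonal, so atoms of `μ` have infinite potential. -/
noncomputable def rieszPotential (μ : Measure X) (t : ℝ) (x : X) : ℝ≥0∞ :=
  ∫⁻ y, (edist x y ^ t)⁻¹ ∂μ

variable [OpensMeasurableSpace X] {s t : ℝ} {μ : Measure X}

lemma rieszPotential_le_tsum (ht : 0 ≤ t) (μ : Measure X) (x : X) :
    rieszPotential μ t x ≤
      μ univ + ∑' j : ℕ, ((2 : ℝ≥0∞) ^ (j + 1)) ^ t * μ (closedBall x ((1 / 2) ^ j)) :=
  calc rieszPotential μ t x
      ≤ ∫⁻ y, 1 + ∑' j : ℕ,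
          (closedBall x ((1 / 2) ^ j)).indicator (fun _ ↦ ((2 : ℝ≥0∞) ^ (j + 1)) ^ t) y ∂μ :=
        lintegral_mono (inv_edist_rpow_le_one_add_tsum_indicator ht x)
    _ = μ univ + ∑' j : ℕ, ((2 : ℝ≥0∞) ^ (j + 1)) ^ t * μ (closedBall x ((1 / 2) ^ j)) := by
        rw [lintegral_add_left measurable_const, lintegral_tsum fun j ↦
          (measurable_const.indicator measurableSet_closedBall).aemeasurable]
        simp only [lintegral_const, one_mul, lintegral_indicator_const measurableSet_closedBall]

lemma rieszPotential_lt_top [IsFiniteMeasure μ] (ht : 0 ≤ t) (hts : t < s) {x : X} {c : ℝ≥0}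
    (hc : ∀ r > 0, μ (closedBall x r) ≤ c * ENNReal.ofReal r ^ s) :
    rieszPotential μ t x < ⊤ := by
  have hterm (j : ℕ) : ((2 : ℝ≥0∞) ^ (j + 1)) ^ t * μ (closedBall x ((1 / 2) ^ j)) ≤
      2 ^ t * c * (2 ^ (t - s)) ^ j :=
    calc ((2 : ℝ≥0∞) ^ (j + 1)) ^ t * μ (closedBall x ((1 / 2) ^ j))
        ≤ (2 ^ (j + 1)) ^ t * (c * ENNReal.ofReal ((1 / 2) ^ j) ^ s) := by
          gcongr
          exact hc _ (by positivity)
      _ = 2 ^ t * c * (2 ^ (t - s)) ^ j := by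
          rw [ofReal_half_pow, sub_eq_add_neg, ENNReal.rpow_add _ _ two_ne_zero (by simp), mul_pow,
            pow_succ', ENNReal.mul_rpow_of_nonneg _ _ ht, ENNReal.rpow_neg, ← ENNReal.inv_rpow,
            ENNReal.inv_pow]
          simp only [← ENNReal.rpow_natCast, ← ENNReal.rpow_mul, mul_comm (j : ℝ)]
          ring
  have hratio : (2 : ℝ≥0∞) ^ (t - s) < 1 :=
    ENNReal.rpow_lt_one_of_one_lt_of_neg (by norm_num) (by linarith)
  calc rieszPotential μ t x
      ≤ μ univ + ∑' j : ℕ, 2 ^ t * c * ((2 : ℝ≥0∞) ^ (t - s)) ^ j :=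
        (rieszPotential_le_tsum ht μ x).trans
          (add_le_add_right (ENNReal.tsum_le_tsum hterm) _)
    _ = μ univ + 2 ^ t * c * (1 - 2 ^ (t - s))⁻¹ := by
        rw [ENNReal.tsum_mul_left, ENNReal.tsum_geometric]
    _ < ⊤ := by
        have : (1 - (2 : ℝ≥0∞) ^ (t - s))⁻¹ ≠ ⊤ := ENNReal.inv_ne_top.2 (tsub_pos_of_lt hratio).ne'
        finiteness

end RieszPotential

lemma ae_rieszPotential_lt_top_of_absolutelyContinuous {X : Type*} [MetricSpace X]
    [SecondCountableTopology X] [MeasurableSpace X] [BorelSpace X] {s t : ℝ} {μ : Measure X}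
    [IsFiniteMeasure μ] (hμ : μ ≪ μH[s]) (ht : 0 ≤ t) (hts : t < s) :
    ∀ᵐ x ∂μ, rieszPotential μ t x < ⊤ := by
  filter_upwards [hμ.ae_le (ae_hausdorffMeasure_exists_forall_measure_closedBall_le μ
    (ht.trans_lt hts))] with x ⟨c, hc⟩
  exact rieszPotential_lt_top ht hts hc

lemma map_absolutelyContinuous_of_ae_liminf_lt_top {X Y ι : Type*} [MeasurableSpace X]
    [MetricSpace Y] [SecondCountableTopology Y] [HasBesicovitchCovering Y]
    [MeasurableSpace Y] [BorelSpace Y] {μ : Measure X} [IsFiniteMeasure μ]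
    {ρ : Measure Y} [IsLocallyFiniteMeasure ρ] [ρ.IsOpenPosMeasure]
    {f : X → Y} (hf : AEMeasurable f μ)
    {l : Filter ι} [l.NeBot] {δ : ι → ℝ} (hδ : Tendsto δ l (𝓝[>] 0))
    (h : ∀ᵐ x ∂μ, liminf (fun i ↦
      μ.map f (closedBall (f x) (δ i)) / ρ (closedBall (f x) (δ i))) l < ⊤) :
    μ.map f ≪ ρ := by
  -- Differentiating `ρ` with respect to `μ.map f`, rather than conversely, gives information at
  -- `μ.map f`-almost every point.
  suffices hD : ∀ᵐ y ∂μ.map f, ρ.rnDeriv (μ.map f) y ≠ 0 from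
    (withDensity_absolutelyContinuous' (Measure.measurable_rnDeriv _ _).aemeasurable hD).trans
      (Measure.withDensity_rnDeriv_le _ _).absolutelyContinuous
  refine (ae_map_iff hf
    (Measure.measurable_rnDeriv _ _ (measurableSet_singleton 0).compl)).2 ?_
  filter_upwards [h, ae_of_ae_map hf (Besicovitch.ae_tendsto_rnDeriv ρ (μ.map f))] with x hx hlim
  have hlim_inv : Tendsto (fun i ↦
      μ.map f (closedBall (f x) (δ i)) / ρ (closedBall (f x) (δ i))) l
      (𝓝 (ρ.rnDeriv (μ.map f) (f x))⁻¹) := by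
    refine (tendsto_inv_iff.2 (hlim.comp hδ)).congr' ?_
    filter_upwards [hδ.eventually self_mem_nhdsWithin] with i hi
    exact ENNReal.inv_div (.inl (by finiteness)) (.inr (measure_closedBall_pos ρ _ hi).ne')
  rwa [hlim_inv.liminf_eq, ENNReal.inv_lt_top, pos_iff_ne_zero] at hx

lemma measurableSet_setOf_dist_le {U X Y : Type*} [MeasurableSpace U] [MeasurableSpace X]
    [PseudoMetricSpace Y] [SecondCountableTopology Y] [MeasurableSpace Y] [OpensMeasurableSpace Y]
    {π : U → X → Y} (hπ : Measurable (Function.uncurry π)) (δ : ℝ) :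
    MeasurableSet {w : (U × X) × X | dist (π w.1.1 w.2) (π w.1.1 w.1.2) ≤ δ} := by
  have hy : Measurable fun w : (U × X) × X ↦ π w.1.1 w.2 :=
    hπ.comp (measurable_fst.fst.prodMk measurable_snd)
  have hx : Measurable fun w : (U × X) × X ↦ π w.1.1 w.1.2 :=
    hπ.comp (measurable_fst.fst.prodMk measurable_fst.snd)
  exact measurableSet_le (hy.dist hx) measurable_const

section Transversality

variable {U X G : Type*} [MeasurableSpace U] [MetricSpace X] [NormedAddCommGroup G]
  [MeasurableSpace G]

/-- Transversality, in the sense of Peres and Schlag, of a family of maps `π u : X → G` whose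
parameter `u` is distributed according to `ν`: the parameters for which `π u x` and `π u y` are
`δ`-close have measure at most `C * ρ (B(0, δ)) / d(x, y) ^ t`, where `ρ` is a translation invariant
reference measure on `G`. -/
def IsTransversal (π : U → X → G) (ν : Measure U) (ρ : Measure G) (t : ℝ) (C : ℝ≥0∞) : Prop :=
  ∀ x y : X, ∀ δ > 0,
    ν {u | dist (π u y) (π u x) ≤ δ} ≤ C * ρ (closedBall 0 δ) / edist x y ^ t

namespace IsTransversal

variable [MeasurableSpace X] [BorelSpace X] [BorelSpace G] {π : U → X → G} {ν : Measure U}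
  [SFinite ν] {μ : Measure X} {ρ : Measure G} {t : ℝ} {C : ℝ≥0∞}

lemma lintegral_measure_setOf_dist_le [SecondCountableTopology G] [SFinite μ]
    (h : IsTransversal π ν ρ t C) (hπ : Measurable (Function.uncurry π)) (x : X) {δ : ℝ}
    (hδ : 0 < δ) :
    ∫⁻ u, μ {y | dist (π u y) (π u x) ≤ δ} ∂ν ≤
      C * ρ (closedBall 0 δ) * rieszPotential μ t x := by
  have hT : MeasurableSet {w : U × X | dist (π w.1 w.2) (π w.1 x) ≤ δ} :=
    measurableSet_setOf_dist_le hπ δ |>.preimage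
      (f := fun w : U × X ↦ ((w.1, x), w.2)) (by fun_prop)
  calc ∫⁻ u, μ {y | dist (π u y) (π u x) ≤ δ} ∂ν
      = ∫⁻ y, ν {u | dist (π u y) (π u x) ≤ δ} ∂μ :=
        (Measure.prod_apply hT).symm.trans (Measure.prod_apply_symm hT)
    _ ≤ ∫⁻ y, C * ρ (closedBall 0 δ) / edist x y ^ t ∂μ := lintegral_mono fun y ↦ h x y δ hδ
    _ = C * ρ (closedBall 0 δ) * rieszPotential μ t x :=
        lintegral_const_mul _ (by fun_prop)

lemma ae_liminf_lt_top [SecondCountableTopology G] [SFinite μ]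
    (h : IsTransversal π ν ρ t C) (hπ : Measurable (Function.uncurry π)) (hC : C ≠ ⊤)
    {δ : ℕ → ℝ} (hδ : ∀ m, 0 < δ m) {x : X} (hx : rieszPotential μ t x < ⊤) :
    ∀ᵐ u ∂ν, liminf (fun m ↦
      μ {y | dist (π u y) (π u x) ≤ δ m} / ρ (closedBall 0 (δ m))) atTop < ⊤ := by
  have hmeas (m : ℕ) : Measurable fun u ↦ μ {y | dist (π u y) (π u x) ≤ δ m} :=
    (measurable_measure_prodMk_left (measurableSet_setOf_dist_le hπ (δ m))).comp
      (measurable_id.prodMk measurable_const)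
  have hbound (m : ℕ) : ∫⁻ u, μ {y | dist (π u y) (π u x) ≤ δ m} / ρ (closedBall 0 (δ m)) ∂ν ≤
      C * rieszPotential μ t x := by
    simp only [div_eq_mul_inv]
    rw [lintegral_mul_const _ (hmeas m), ← div_eq_mul_inv]
    refine ENNReal.div_le_of_le_mul ((h.lintegral_measure_setOf_dist_le hπ x (hδ m)).trans_eq ?_)
    ring
  refine ae_lt_top (.liminf fun m ↦ (hmeas m).div_const _) (ne_top_of_le_ne_top
    (ENNReal.mul_ne_top hC hx.ne) ((lintegral_liminf_le fun m ↦ (hmeas m).div_const _).trans ?_))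
  exact (liminf_le_liminf (.of_forall hbound)).trans_eq (liminf_const _)

variable [NormedSpace ℝ G] [FiniteDimensional ℝ G] [ρ.IsAddHaarMeasure]

lemma ae_map_absolutelyContinuous_of_ae_rieszPotential_lt_top [IsFiniteMeasure μ]
    (h : IsTransversal π ν ρ t C) (hπ : Measurable (Function.uncurry π)) (hC : C ≠ ⊤)
    (hμ : ∀ᵐ x ∂μ, rieszPotential μ t x < ⊤) :
    ∀ᵐ u ∂ν, μ.map (π u) ≪ ρ := by
  obtain ⟨δ, -, hδ_pos, hδ⟩ := exists_seq_strictAnti_tendsto (0 : ℝ)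
  have hmeas (m : ℕ) : Measurable fun p : U × X ↦
      μ {y | dist (π p.1 y) (π p.1 p.2) ≤ δ m} / ρ (closedBall 0 (δ m)) :=
    (measurable_measure_prodMk_left (measurableSet_setOf_dist_le hπ (δ m))).div_const _
  have hliminf : ∀ᵐ u ∂ν, ∀ᵐ x ∂μ, liminf (fun m ↦
      μ {y | dist (π u y) (π u x) ≤ δ m} / ρ (closedBall 0 (δ m))) atTop < ⊤ := by
    refine (Measure.ae_ae_comm (measurableSet_lt (f := fun p : U × X ↦ _)
      (Measurable.liminf hmeas) measurable_const)).2 ?_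
    filter_upwards [hμ] with x hx
    exact h.ae_liminf_lt_top hπ hC hδ_pos hx
  filter_upwards [hliminf] with u hu
  have hπu : Measurable (π u) := hπ.comp measurable_prodMk_left
  refine map_absolutelyContinuous_of_ae_liminf_lt_top hπu.aemeasurable
    (tendsto_nhdsWithin_iff.2 ⟨hδ, .of_forall hδ_pos⟩) ?_
  filter_upwards [hu] with x hx
  simp only [Measure.map_apply hπu measurableSet_closedBall, Measure.addHaar_closedBall_center ρ]
  exact hx

theorem ae_map_absolutelyContinuous [SecondCountableTopology X] [SFinite μ]
    (h : IsTransversal π ν ρ t C)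
    (hπ : Measurable (Function.uncurry π)) (hC : C ≠ ⊤) (ht : 0 ≤ t) {s : ℝ} (hts : t < s)
    (hμ : μ ≪ μH[s]) :
    ∀ᵐ u ∂ν, μ.map (π u) ≪ ρ := by
  have hpot := ae_rieszPotential_lt_top_of_absolutelyContinuous
    ((toFinite_absolutelyContinuous μ).trans hμ) ht hts
  filter_upwards [h.ae_map_absolutelyContinuous_of_ae_rieszPotential_lt_top hπ hC hpot] with u hu
  exact ((absolutelyContinuous_toFinite μ).map (hπ.comp measurable_prodMk_left)).trans hu

end IsTransversal

end Transversality

section Slab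

variable {V : Type*} [MeasurableSpace V]

lemma lintegral_volume_setOf_add_smul_mem [AddCommGroup V] [Module ℝ V]
    [MeasurableAdd₂ V] [MeasurableSMul₂ ℝ V] (ν : Measure V) [SFinite ν] [ν.IsAddRightInvariant]
    {S : Set V} (hS : MeasurableSet S) (e : V) :
    ∫⁻ u, volume {τ ∈ Icc (0 : ℝ) 1 | u + τ • e ∈ S} ∂ν = ν S := by
  have hT : MeasurableSet {w : V × ℝ | w.2 ∈ Icc 0 1 ∧ w.1 + w.2 • e ∈ S} :=
    (measurable_snd measurableSet_Icc).inter ((by fun_prop : Measurable _) hS)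
  have hslice (τ : ℝ) : ν {u | τ ∈ Icc (0 : ℝ) 1 ∧ u + τ • e ∈ S} =
      (Icc (0 : ℝ) 1).indicator (fun _ ↦ ν S) τ := by
    by_cases hτ : τ ∈ Icc (0 : ℝ) 1
    · simp only [hτ, true_and, indicator_of_mem]
      exact measure_preimage_add_right ν (τ • e) S
    · simp [hτ]
  calc ∫⁻ u, volume {τ ∈ Icc (0 : ℝ) 1 | u + τ • e ∈ S} ∂ν
      = ∫⁻ τ, ν {u | τ ∈ Icc (0 : ℝ) 1 ∧ u + τ • e ∈ S} :=
        (Measure.prod_apply hT).symm.trans (Measure.prod_apply_symm hT)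
    _ = ν S := by
        simp only [hslice, lintegral_indicator_const measurableSet_Icc, Real.volume_Icc, sub_zero,
          ENNReal.ofReal_one, mul_one]

variable [NormedAddCommGroup V] [InnerProductSpace ℝ V] [BorelSpace V] [SecondCountableTopology V]
  (ν : Measure V) [SFinite ν] [ν.IsAddRightInvariant]

lemma measure_slab_inter_closedBall_mul_norm_le (a : V) (b R δ : ℝ) :
    ν ({u | |⟪a, u⟫ + b| ≤ δ} ∩ closedBall 0 R) * ENNReal.ofReal ‖a‖ ≤
      ν (closedBall 0 (R + 1)) * ENNReal.ofReal (2 * δ) := by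
  rcases eq_or_ne a 0 with rfl | ha
  · simp
  have ha_pos : 0 < ‖a‖ := norm_pos_iff.2 ha
  set S := {u | |⟪a, u⟫ + b| ≤ δ} ∩ closedBall (0 : V) R
  have hS : MeasurableSet S :=
    (isClosed_le (by fun_prop) (by fun_prop)).measurableSet.inter measurableSet_closedBall
  set e : V := ‖a‖⁻¹ • a
  have he : ‖e‖ = 1 := norm_smul_inv_norm ha
  have hae : ⟪a, e⟫ = ‖a‖ := by
    rw [real_inner_smul_right, real_inner_self_eq_norm_sq]
    field_simp
  -- A line in the direction `e` meets the slab in a segment of length `2 * δ / ‖a‖`.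
  have hfiber (u : V) : volume {τ ∈ Icc (0 : ℝ) 1 | u + τ • e ∈ S} ≤
      (closedBall 0 (R + 1)).indicator (fun _ ↦ ENNReal.ofReal (2 * (δ / ‖a‖))) u := by
    by_cases hu : u ∈ closedBall 0 (R + 1)
    · rw [indicator_of_mem hu, ← Real.volume_closedBall (-(⟪a, u⟫ + b) / ‖a‖)]
      refine measure_mono fun τ ⟨_, hτ, _⟩ ↦ ?_
      have hshift : τ - -(⟪a, u⟫ + b) / ‖a‖ = (⟪a, u + τ • e⟫ + b) / ‖a‖ := by
        rw [inner_add_right, real_inner_smul_right, hae]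
        field_simp
        ring
      rw [mem_closedBall, Real.dist_eq, hshift, abs_div, abs_of_pos ha_pos]
      gcongr
      exact hτ
    · rw [indicator_of_notMem hu, nonpos_iff_eq_zero]
      refine measure_mono_null (fun τ ⟨⟨hτ₀, hτ₁⟩, _, hball⟩ ↦ hu ?_) measure_empty
      have hτe : ‖τ • e‖ ≤ 1 := by rwa [norm_smul, he, mul_one, Real.norm_of_nonneg hτ₀]
      rw [mem_closedBall_zero_iff] at hball ⊢
      linarith [norm_le_add_norm_add u (τ • e)]
  calc ν S * ENNReal.ofReal ‖a‖
      ≤ ν (closedBall 0 (R + 1)) * ENNReal.ofReal (2 * (δ / ‖a‖)) * ENNReal.ofReal ‖a‖ := by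
        gcongr
        rw [← lintegral_volume_setOf_add_smul_mem ν hS e, mul_comm,
          ← lintegral_indicator_const measurableSet_closedBall]
        exact lintegral_mono hfiber
    _ = ν (closedBall 0 (R + 1)) * ENNReal.ofReal (2 * δ) := by
        rw [mul_assoc, ← ENNReal.ofReal_mul' ha_pos.le]
        field_simp

lemma measure_slab_inter_closedBall_mul_prodNorm_le (z : V × ℝ) {R δ : ℝ} (hR : 0 ≤ R)
    (hδ : 0 ≤ δ) :
    ν ({u | |⟪z.1, u⟫ + z.2| ≤ δ} ∩ closedBall 0 R) * ENNReal.ofReal ‖z‖ ≤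
      ENNReal.ofReal (R + 2) * ν (closedBall 0 (R + 1)) * ENNReal.ofReal (2 * δ) := by
  obtain ⟨a, b⟩ := z
  set S := {u | |⟪a, u⟫ + b| ≤ δ} ∩ closedBall (0 : V) R
  rcases S.eq_empty_or_nonempty with hempty | ⟨u, hu, huR⟩
  · simp [hempty]
  have hb : |b| ≤ δ + ‖a‖ * R := by
    have hau : |⟪a, u⟫| ≤ ‖a‖ * R := (abs_real_inner_le_norm a u).trans
      (by gcongr; exact mem_closedBall_zero_iff.1 huR)
    have := abs_sub (⟪a, u⟫ + b) ⟪a, u⟫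
    rw [add_sub_cancel_left] at this
    exact this.trans (add_le_add hu hau)
  have hz : ‖(a, b)‖ ≤ 2 * δ + (R + 1) * ‖a‖ :=
    max_le (by nlinarith [norm_nonneg a]) (by rw [Real.norm_eq_abs]; nlinarith [norm_nonneg a])
  calc ν S * ENNReal.ofReal ‖(a, b)‖
      ≤ ν S * ENNReal.ofReal (2 * δ) + ENNReal.ofReal (R + 1) * (ν S * ENNReal.ofReal ‖a‖) := by
        rw [mul_left_comm, ← ENNReal.ofReal_mul (by positivity), ← mul_add,
          ← ENNReal.ofReal_add (by positivity) (by positivity)]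
        gcongr
    _ ≤ ν (closedBall 0 (R + 1)) * ENNReal.ofReal (2 * δ) +
          ENNReal.ofReal (R + 1) * (ν (closedBall 0 (R + 1)) * ENNReal.ofReal (2 * δ)) := by
        gcongr ?_ * _ + _ * ?_
        · exact measure_mono (inter_subset_right.trans (closedBall_subset_closedBall (by linarith)))
        · exact measure_slab_inter_closedBall_mul_norm_le ν a b R δ
    _ = ENNReal.ofReal (R + 2) * ν (closedBall 0 (R + 1)) * ENNReal.ofReal (2 * δ) := by
        rw [show R + 2 = 1 + (R + 1) by ring, ENNReal.ofReal_add zero_le_one (by positivity),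
          ENNReal.ofReal_one]
        ring

end Slab

section DualProj

variable {V : Type*} [NormedAddCommGroup V] [InnerProductSpace ℝ V]

/-- The map `π_u(a, b) = ⟪a, u⟫ + b` on `V × ℝ`, as a continuous linear functional; `dualProj` is
the case `V = ℝ^{n−1}`. -/
noncomputable def dualProjCLM (u : V) : V × ℝ →L[ℝ] ℝ :=
  (innerSLFlip ℝ u).coprod (.id ℝ ℝ)

lemma dualProjCLM_apply (u : V) (p : V × ℝ) : dualProjCLM u p = ⟪p.1, u⟫ + p.2 := rfl

variable [FiniteDimensional ℝ V] [MeasurableSpace V] [BorelSpace V] (ν : Measure V)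
  [ν.IsAddHaarMeasure]

lemma isTransversal_dualProjCLM {R : ℝ} (hR : 0 ≤ R) :
    IsTransversal (fun u : V ↦ dualProjCLM u) (ν.restrict (closedBall 0 R)) volume 1
      (ENNReal.ofReal (R + 2) * ν (closedBall 0 (R + 1))) := by
  intro x y δ hδ
  have hset : {u : V | dist (dualProjCLM u y) (dualProjCLM u x) ≤ δ} =
      {u | |⟪(y - x).1, u⟫ + (y - x).2| ≤ δ} := by
    simp only [Real.dist_eq, ← dualProjCLM_apply, map_sub]
  have hC : ENNReal.ofReal (R + 2) * ν (closedBall 0 (R + 1)) ≠ 0 :=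
    mul_ne_zero (ENNReal.ofReal_pos.2 (by linarith)).ne'
      (measure_closedBall_pos ν 0 (by linarith)).ne'
  rw [Real.volume_closedBall, ENNReal.rpow_one,
    ENNReal.le_div_iff_mul_le (.inr (mul_ne_zero hC (by simpa using hδ))) (.inl (edist_ne_top x y)),
    Measure.restrict_apply' measurableSet_closedBall, hset, edist_comm, edist_eq_enorm_sub,
    ← ofReal_norm]
  exact measure_slab_inter_closedBall_mul_prodNorm_le ν (y - x) hR hδ.le

theorem ae_map_dualProjCLM_absolutelyContinuous {s : ℝ} (hs : 1 < s) {μ : Measure (V × ℝ)}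
    [SFinite μ] (hμ : μ ≪ μH[s]) :
    ∀ᵐ u ∂ν, μ.map (dualProjCLM u) ≪ volume := by
  rw [← ν.restrict_univ, ← iUnion_closedBall_nat 0, ae_restrict_iUnion_iff]
  intro R
  have hmeas : Measurable (Function.uncurry fun u : V ↦ (dualProjCLM u : V × ℝ → ℝ)) := by
    simp only [Function.uncurry_def, dualProjCLM_apply]
    fun_prop
  exact (isTransversal_dualProjCLM ν R.cast_nonneg).ae_map_absolutelyContinuous hmeas
    (ENNReal.mul_ne_top ENNReal.ofReal_ne_top measure_closedBall_lt_top.ne) zero_le_one hs hμ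

theorem strong_dualProj_positive_measure_general {s : ℝ} (hs : 1 < s) (E : Set (V × ℝ))
    [SFinite ((μH[s] : Measure (V × ℝ)).restrict E)] :
    ∀ᵐ u ∂ν, ∀ F ⊆ E, 0 < μH[s] F → 0 < volume (dualProjCLM u '' F) := by
  filter_upwards [ae_map_dualProjCLM_absolutelyContinuous ν hs
    (Measure.restrict_le_self (μ := (μH[s] : Measure (V × ℝ))) (s := E)).absolutelyContinuous]
    with u hac F hFE hF
  rw [← Measure.restrict_eq_self _ hFE] at hF
  refine pos_iff_ne_zero.2 fun hnull ↦ hF.ne' ?_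
  have hπ : Measure.QuasiMeasurePreserving (dualProjCLM u) (μH[s].restrict E) volume :=
    ⟨(dualProjCLM u).measurable, hac⟩
  exact measure_mono_null (subset_preimage_image _ F) (hπ.preimage_null hnull)

end DualProj

/-- **Strong projection theorem for the dual maps `π_u`, positive measure part.**
If `E ⊆ ℝⁿ = ℝ^{n−1} × ℝ` is `𝓗ˢ`-measurable with `0 < 𝓗ˢ(E) < ∞` where
`s = dim_H E > 1`, then there is a Lebesgue null set `X ⊆ ℝ^{n−1}` such that for every
`u ∉ X` and every `𝓗ˢ`-measurable `F ⊆ E` with `𝓗ˢ(F) > 0`,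
`𝓛¹(π_u(F)) > 0`. -/
theorem strong_dualProj_positive_measure (n : ℕ) (hn : 2 ≤ n) (s : ℝ) (hs : 1 < s)
    (E : Set (EuclideanSpace ℝ (Fin (n - 1)) × ℝ))
    (hdimE : dimH E = ENNReal.ofReal s)
    (hE : NullMeasurableSet E μH[s])
    (hE0 : 0 < μH[s] E) (hEfin : μH[s] E < ⊤) :
    ∃ X : Set (EuclideanSpace ℝ (Fin (n - 1))), volume X = 0 ∧
      ∀ u : EuclideanSpace ℝ (Fin (n - 1)), u ∉ X →
        ∀ F : Set (EuclideanSpace ℝ (Fin (n - 1)) × ℝ), F ⊆ E →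
          NullMeasurableSet F μH[s] → 0 < μH[s] F →
          0 < volume (dualProj u '' F) := by
  have : IsFiniteMeasure (μH[s].restrict E) := ⟨by rwa [Measure.restrict_apply_univ]⟩
  exact ⟨_, ae_iff.1 (strong_dualProj_positive_measure_general volume hs E),
    fun u hu F hFE _ hF ↦ not_not.1 hu F hFE hF⟩
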